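/- arXiv:1811.02822 — 4 statements merged into one kernel-verified Lean document; each statement's English description precedes it below -/
import Mathlib

section
/- Proposition 1 (validity of the CRIT_1 lower bound): Let x* be an optimal leader strategy for BKP with optimal value z* = f(x*). If ∑_{i : x*_i = 0} w_i > C_l, so that x* has a critical item c, then z(CRIT_1(c)) ≤ z*. -/
open Finset

/-- A 0/1 vector. -/
def Binary {n : ℕ} (x : Fin n → ℤ) : Prop :=
  ∀ i, x i = 0 ∨ x i = 1

/-- The set of follower objective values attainable against a leader strategy `x`. -/
def followerValues {n : ℕ} (p w : Fin n → ℤ) (Cl : ℤ) (x : Fin n → ℤ) : Set ℤ :=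
  {s | ∃ y : Fin n → ℤ, Binary y ∧ (∀ i, y i ≤ 1 - x i) ∧
    (∑ i, w i * y i) ≤ Cl ∧ s = ∑ i, p i * y i}

/-- `c` is the critical item of the leader strategy `x`. -/
def IsCritical {n : ℕ} (w : Fin n → ℤ) (Cl : ℤ) (x : Fin n → ℤ) (c : Fin n) : Prop :=
  x c = 0 ∧
  (∑ i ∈ univ.filter (fun i => i < c ∧ x i = 0), w i) < Cl ∧
  Cl ≤ ∑ i ∈ univ.filter (fun i => i ≤ c ∧ x i = 0), w i

/-- Weight of the split solution of `x` with critical item `c`. -/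
def splitWeight {n : ℕ} (w : Fin n → ℤ) (c : Fin n) (x : Fin n → ℤ) : ℤ :=
  ∑ i ∈ univ.filter (fun i => i < c), w i * (1 - x i)

/-- Profit of the split solution of `x` with critical item `c`. -/
def splitProfit {n : ℕ} (p : Fin n → ℤ) (c : Fin n) (x : Fin n → ℤ) : ℤ :=
  ∑ i ∈ univ.filter (fun i => i < c), p i * (1 - x i)

/-- Objective values of the feasible solutions of model `CRIT₁(c)`. -/
def crit1Values {n : ℕ} (p w v : Fin n → ℤ) (Cu Cl : ℤ) (c : Fin n) : Set ℤ :=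
  {s | ∃ x : Fin n → ℤ, Binary x ∧ (∑ i, v i * x i) ≤ Cu ∧ x c = 0 ∧
    1 ≤ Cl - splitWeight w c x ∧ Cl - splitWeight w c x ≤ w c ∧
    s = splitProfit p c x}

/-- Profit change `p^τ` of a tuple `τ` w.r.t. critical item `c`. -/
def pT {n : ℕ} (p : Fin n → ℤ) (c : Fin n) (τ : Finset (Fin n)) : ℤ :=
  (∑ j ∈ τ.filter (fun j => c ≤ j), p j) - ∑ i ∈ τ.filter (fun i => i < c), p i

/-- Weight change `w^τ` of a tuple `τ` w.r.t. critical item `c`. -/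
def wT {n : ℕ} (w : Fin n → ℤ) (c : Fin n) (τ : Finset (Fin n)) : ℤ :=
  (∑ j ∈ τ.filter (fun j => c ≤ j), w j) - ∑ i ∈ τ.filter (fun i => i < c), w i

/-- Objective values of the feasible solutions of model `CRIT₂(c, T)`. -/
def crit2Values {n : ℕ} (p w v : Fin n → ℤ) (Cu Cl : ℤ) (c : Fin n)
    (T : Finset (Finset (Fin n))) : Set ℤ :=
  {s | ∃ x : Fin n → ℤ, Binary x ∧ (∑ i, v i * x i) ≤ Cu ∧ x c = 0 ∧
    1 ≤ Cl - splitWeight w c x ∧ Cl - splitWeight w c x ≤ w c ∧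
    s = splitProfit p c x +
      (T.filter (fun τ => (∀ i ∈ τ, x i = 0) ∧ wT w c τ ≤ Cl - splitWeight w c x)).fold
        max 0 (pT p c)}

/-!
The solution packing every available item before the critical item `c` fits into the follower's
knapsack, so its profit is at most `f x`. On the other hand, `c` being critical for `x` says exactly
that `x` satisfies the constraints of `CRIT₁(c)`, whose objective at `x` is that same profit.
-/

theorem sum_filter_le_and {ι M : Type*} [Fintype ι] [PartialOrder ι]
    [DecidableLE ι] [DecidableLT ι] [AddCommMonoid M] {P : ι → Prop} [DecidablePred P]
    {c : ι} (hc : P c) (g : ι → M) :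
    ∑ i with i ≤ c ∧ P i, g i = g c + ∑ i with i < c ∧ P i, g i := by
  classical
  have filter_eq_insert :
      univ.filter (fun i => i ≤ c ∧ P i) = insert c (univ.filter (fun i => i < c ∧ P i)) := by
    ext i
    simp only [mem_filter_univ, mem_insert, le_iff_eq_or_lt]
    grind
  rw [filter_eq_insert, sum_insert (by simp)]

section

variable {n : ℕ} {p w v x : Fin n → ℤ} {Cu Cl : ℤ} {c : Fin n}

/-- The split solution of `x` with critical item `c`: the follower's response that packs exactly the
items before `c` left over by the leader, as a vector whose weight and profit are `splitWeight` and
`splitProfit`. -/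
def splitSolution (c : Fin n) (x : Fin n → ℤ) : Fin n → ℤ :=
  fun i => if i < c then 1 - x i else 0

theorem sum_mul_splitSolution (g : Fin n → ℤ) (c : Fin n) (x : Fin n → ℤ) :
    ∑ i, g i * splitSolution c x i = ∑ i with i < c, g i * (1 - x i) := by
  simp only [splitSolution, mul_ite, mul_zero, sum_filter]

theorem Binary.le_one (hx : Binary x) (i : Fin n) : x i ≤ 1 := by
  rcases hx i with h | h <;> simp [h]

theorem Binary.one_sub_eq_ite (hx : Binary x) (i : Fin n) : 1 - x i = if x i = 0 then 1 else 0 := by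
  rcases hx i with h | h <;> simp [h]

theorem binary_splitSolution (hx : Binary x) (c : Fin n) : Binary (splitSolution c x) := by
  intro i
  rcases hx i with h | h <;> by_cases hi : i < c <;> simp [splitSolution, h, hi]

theorem splitSolution_le_one_sub (c : Fin n) {i : Fin n} (hxi : x i ≤ 1) :
    splitSolution c x i ≤ 1 - x i := by
  by_cases hi : i < c <;> simp [splitSolution, hi, hxi]

theorem Binary.splitWeight_eq_sum_filter (hx : Binary x) (w : Fin n → ℤ) (c : Fin n) :
    splitWeight w c x = ∑ i with i < c ∧ x i = 0, w i := by
  simp only [splitWeight, hx.one_sub_eq_ite, mul_ite, mul_one, mul_zero, ← sum_filter,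
    filter_filter]

theorem IsCritical.residual_mem_Icc (hc : IsCritical w Cl x c) (hx : Binary x) :
    Cl - splitWeight w c x ∈ Set.Icc 1 (w c) := by
  obtain ⟨hxc, weight_before_lt, le_weight_through⟩ := hc
  rw [sum_filter_le_and (P := fun i => x i = 0) hxc, ← hx.splitWeight_eq_sum_filter]
    at le_weight_through
  rw [← hx.splitWeight_eq_sum_filter] at weight_before_lt
  constructor <;> linarith

theorem splitProfit_mem_crit1Values (hx : Binary x) (hxfeas : ∑ i, v i * x i ≤ Cu)
    (hc : IsCritical w Cl x c) : splitProfit p c x ∈ crit1Values p w v Cu Cl c :=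
  have ⟨one_le_residual, residual_le⟩ := hc.residual_mem_Icc hx
  ⟨x, hx, hxfeas, hc.1, one_le_residual, residual_le, rfl⟩

theorem splitProfit_mem_followerValues (hx : Binary x) (hfit : splitWeight w c x ≤ Cl) :
    splitProfit p c x ∈ followerValues p w Cl x :=
  ⟨splitSolution c x, binary_splitSolution hx c, fun i => splitSolution_le_one_sub c (hx.le_one i),
    (sum_mul_splitSolution w c x).trans_le hfit, (sum_mul_splitSolution p c x).symm⟩

theorem crit1_lower_bound_general (hx : Binary x) (hxfeas : ∑ i, v i * x i ≤ Cu)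
    (hc : IsCritical w Cl x c) {z z1 : ℤ} (hz : IsGreatest (followerValues p w Cl x) z)
    (hz1 : IsLeast (crit1Values p w v Cu Cl c) z1) : z1 ≤ z := by
  have hfit : splitWeight w c x ≤ Cl := by linarith [(hc.residual_mem_Icc hx).1]
  calc
    z1 ≤ splitProfit p c x := hz1.2 (splitProfit_mem_crit1Values hx hxfeas hc)
    _ ≤ z := hz.2 (splitProfit_mem_followerValues hx hfit)

end

/-- **Proposition 1.** If the optimal leader strategy `xstar` (with optimal value
`z* = f xstar`) induces a critical item `c`, then `z(CRIT₁(c)) ≤ z*`. -/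
theorem crit1_lower_bound
    (n : ℕ) (p w v : Fin n → ℤ) (Cu Cl : ℤ)
    (hp : ∀ i, 0 < p i) (hw : ∀ i, 0 < w i) (hv : ∀ i, 0 < v i)
    (hsort : ∀ i j : Fin n, i ≤ j → p j * w i ≤ p i * w j)
    (f : (Fin n → ℤ) → ℤ)
    (hf : ∀ x, Binary x → IsGreatest (followerValues p w Cl x) (f x))
    (xstar : Fin n → ℤ) (hxb : Binary xstar)
    (hxfeas : (∑ i, v i * xstar i) ≤ Cu)
    (hxopt : ∀ x, Binary x → (∑ i, v i * x i) ≤ Cu → f xstar ≤ f x)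
    (hcw : Cl < ∑ i ∈ univ.filter (fun i => xstar i = 0), w i)
    (c : Fin n) (hc : IsCritical w Cl xstar c)
    (z1 : ℤ) (hz1 : IsLeast (crit1Values p w v Cu Cl c) z1) :
    z1 ≤ f xstar :=
  crit1_lower_bound_general hxb hxfeas hc (hf xstar hxb) hz1
end

section
/- Tuple improvement lemma: Let x be a feasible leader strategy with ∑_{i : x_i = 0} w_i > C_l and critical item c, and let R(x) = C_l − ∑_{i < c} w_i (1 − x_i). Let τ ⊆ {1,...,n} be any set of items such that x_i = 0 for all i ∈ τ and w^τ ≤ R(x). Then the set ({i < c : x_i = 0} \ {i ∈ τ : i < c}) ∪ {j ∈ τ : j ≥ c} is a feasible follower solution, and consequently f(x) ≥ ∑_{i < c} p_i (1 − x_i) + p^τ. -/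
open Finset

/-- The indicator vector of `({i < c : x i = 0} \ {i ∈ τ : i < c}) ∪ {j ∈ τ : j ≥ c}`. -/
def tupleVec {n : ℕ} (x : Fin n → ℤ) (c : Fin n) (τ : Finset (Fin n)) : Fin n → ℤ :=
  fun i => if (i < c ∧ x i = 0 ∧ i ∉ τ) ∨ (c ≤ i ∧ i ∈ τ) then 1 else 0

/-!
Moving from the split solution to the one modified by `τ` changes every linear functional
`∑ i, q i * y i` by exactly `q^τ`. For `q = w` this gives feasibility, and for `q = p` the bound.
-/

theorem sum_filter_mul_ite_mem {ι R : Type*} [Fintype ι] [DecidableEq ι] [NonAssocSemiring R]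
    (q : ι → R) (s : Finset ι) (P : ι → Prop) [DecidablePred P] :
    ∑ i with P i, q i * (if i ∈ s then 1 else 0) = ∑ i ∈ s with P i, q i := by
  simp only [mul_ite, mul_one, mul_zero, ← sum_filter, filter_filter]
  exact sum_congr (by ext; simp [and_comm]) fun _ _ => rfl

section TupleVec

variable {n : ℕ} {x : Fin n → ℤ} {c : Fin n} {τ : Finset (Fin n)}

theorem binary_tupleVec (x : Fin n → ℤ) (c : Fin n) (τ : Finset (Fin n)) :
    Binary (tupleVec x c τ) := fun _ => (ite_eq_or_eq _ _ _).symm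

theorem tupleVec_le_one_sub (hx : Binary x) (hτ : ∀ i ∈ τ, x i = 0) (i : Fin n) :
    tupleVec x c τ i ≤ 1 - x i := by
  rcases hx i with hi | hi
  · rcases binary_tupleVec x c τ i with hy | hy <;> simp [hi, hy]
  · have hiτ : i ∉ τ := fun h => by simp [hτ i h] at hi
    simp [tupleVec, hi, hiτ]

theorem tupleVec_of_lt (hx : Binary x) (hτ : ∀ i ∈ τ, x i = 0) {i : Fin n} (hi : i < c) :
    tupleVec x c τ i = (1 - x i) - if i ∈ τ then 1 else 0 := by
  by_cases hiτ : i ∈ τ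
  · simp [tupleVec, hiτ, hτ i hiτ, hi.not_ge]
  · rcases hx i with h | h <;> simp [tupleVec, hiτ, hi, h]

theorem tupleVec_of_le {i : Fin n} (hi : c ≤ i) :
    tupleVec x c τ i = if i ∈ τ then 1 else 0 := by
  simp [tupleVec, hi, hi.not_gt]

theorem sum_mul_tupleVec (q : Fin n → ℤ) (hx : Binary x) (hτ : ∀ i ∈ τ, x i = 0) :
    ∑ i, q i * tupleVec x c τ i = splitProfit q c x + pT q c τ := by
  have sum_before : ∑ i with i < c, q i * tupleVec x c τ i =
      splitProfit q c x - ∑ i ∈ τ with i < c, q i := by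
    rw [splitProfit, ← sum_filter_mul_ite_mem q τ, ← sum_sub_distrib]
    refine sum_congr rfl fun i hi => ?_
    rw [tupleVec_of_lt hx hτ (mem_filter.mp hi).2, mul_sub]
  have sum_from : ∑ i with c ≤ i, q i * tupleVec x c τ i = ∑ i ∈ τ with c ≤ i, q i := by
    rw [← sum_filter_mul_ite_mem q τ]
    exact sum_congr rfl fun i hi => by rw [tupleVec_of_le (mem_filter.mp hi).2]
  calc ∑ i, q i * tupleVec x c τ i
      = ∑ i with i < c, q i * tupleVec x c τ i + ∑ i with c ≤ i, q i * tupleVec x c τ i := by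
        simp only [← not_lt, sum_filter_add_sum_filter_not]
    _ = splitProfit q c x + pT q c τ := by
        rw [sum_before, sum_from, pT]
        ring

theorem sum_mul_tupleVec_le {w : Fin n → ℤ} {Cl : ℤ} (hx : Binary x)
    (hτ : ∀ i ∈ τ, x i = 0) (hwτ : wT w c τ ≤ Cl - splitWeight w c x) :
    ∑ i, w i * tupleVec x c τ i ≤ Cl :=
  -- `splitWeight` and `wT` are definitionally `splitProfit` and `pT`.
  calc ∑ i, w i * tupleVec x c τ i
      = splitWeight w c x + wT w c τ := sum_mul_tupleVec w hx hτ
    _ ≤ Cl := by linarith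

theorem tuple_improvement_general {p w : Fin n → ℤ} {Cl : ℤ} (hx : Binary x)
    (hτ : ∀ i ∈ τ, x i = 0) (hwτ : wT w c τ ≤ Cl - splitWeight w c x)
    {fx : ℤ} (hfx : IsGreatest (followerValues p w Cl x) fx) :
    (Binary (tupleVec x c τ) ∧ (∀ i, tupleVec x c τ i ≤ 1 - x i) ∧
      (∑ i, w i * tupleVec x c τ i) ≤ Cl) ∧
    splitProfit p c x + pT p c τ ≤ fx := by
  have hbin := binary_tupleVec x c τ
  have havail := tupleVec_le_one_sub (c := c) hx hτ
  have hweight := sum_mul_tupleVec_le hx hτ hwτ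
  have hprofit := sum_mul_tupleVec (c := c) p hx hτ
  exact ⟨⟨hbin, havail, hweight⟩, hfx.2 ⟨_, hbin, havail, hweight, hprofit.symm⟩⟩

end TupleVec

/-- **Tuple improvement lemma.** For a feasible leader strategy `x` with critical item
`c` and a tuple `τ` of non-interdicted items with `w^τ ≤ R(x)`, the solution obtained
from the split solution by removing the items of `τ` before `c` and adding the items of
`τ` from `c` onwards is a feasible follower solution, hence
`f x ≥ ∑_{i<c} p i * (1 - x i) + p^τ`. -/
theorem tuple_improvement
    (n : ℕ) (p w v : Fin n → ℤ) (Cu Cl : ℤ)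
    (hp : ∀ i, 0 < p i) (hw : ∀ i, 0 < w i) (hv : ∀ i, 0 < v i)
    (hsort : ∀ i j : Fin n, i ≤ j → p j * w i ≤ p i * w j)
    (x : Fin n → ℤ) (hxb : Binary x)
    (hxfeas : (∑ i, v i * x i) ≤ Cu)
    (hcw : Cl < ∑ i ∈ univ.filter (fun i => x i = 0), w i)
    (c : Fin n) (hc : IsCritical w Cl x c)
    (τ : Finset (Fin n)) (hτ : ∀ i ∈ τ, x i = 0)
    (hwτ : wT w c τ ≤ Cl - splitWeight w c x)
    (fx : ℤ) (hfx : IsGreatest (followerValues p w Cl x) fx) :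
    (Binary (tupleVec x c τ) ∧ (∀ i, tupleVec x c τ i ≤ 1 - x i) ∧
      (∑ i, w i * tupleVec x c τ i) ≤ Cl) ∧
    splitProfit p c x + pT p c τ ≤ fx :=
  tuple_improvement_general hxb hτ hwτ hfx
end

section
/- NCR is exact in the no-critical-item case: Suppose there exists an optimal leader strategy x* (feasible with f(x*) = z*) such that ∑_{i : x*_i = 0} w_i ≤ C_l. Then problem NCR is feasible and z* = z(NCR), where z(NCR) = min{∑_i p_i (1 − x_i) : x ∈ {0,1}^n, ∑_i v_i x_i ≤ C_u, ∑_i w_i (1 − x_i) ≤ C_l}. -/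
open Finset

/-- Objective values of the feasible solutions of problem `NCR`. -/
def ncrValues {n : ℕ} (p w v : Fin n → ℤ) (Cu Cl : ℤ) : Set ℤ :=
  {s | ∃ x : Fin n → ℤ, Binary x ∧ (∑ i, v i * x i) ≤ Cu ∧
    (∑ i, w i * (1 - x i)) ≤ Cl ∧ s = ∑ i, p i * (1 - x i)}

namespace Binary

variable {n : ℕ} {x : Fin n → ℤ}

lemma one_sub (hx : Binary x) : Binary fun i => 1 - x i := fun i => by
  rcases hx i with h | h <;> simp [h]

lemma sum_mul_one_sub (hx : Binary x) (a : Fin n → ℤ) :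
    ∑ i, a i * (1 - x i) = ∑ i with x i = 0, a i := by
  rw [sum_filter]
  refine sum_congr rfl fun i _ => ?_
  rcases hx i with h | h <;> simp [h]

end Binary

section Follower

variable {n : ℕ} {p w x : Fin n → ℤ} {Cl : ℤ}

lemma sum_mul_one_sub_mem_upperBounds_followerValues (hp : ∀ i, 0 ≤ p i) :
    ∑ i, p i * (1 - x i) ∈ upperBounds (followerValues p w Cl x) := by
  rintro _ ⟨y, -, hyx, -, rfl⟩
  exact sum_le_sum fun i _ => mul_le_mul_of_nonneg_left (hyx i) (hp i)

lemma sum_mul_one_sub_mem_followerValues (hx : Binary x) (hweight : ∑ i, w i * (1 - x i) ≤ Cl) :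
    ∑ i, p i * (1 - x i) ∈ followerValues p w Cl x :=
  ⟨fun i => 1 - x i, hx.one_sub, fun _ => le_rfl, hweight, rfl⟩

lemma isGreatest_followerValues_sum_mul_one_sub (hp : ∀ i, 0 ≤ p i) (hx : Binary x)
    (hweight : ∑ i, w i * (1 - x i) ≤ Cl) :
    IsGreatest (followerValues p w Cl x) (∑ i, p i * (1 - x i)) :=
  ⟨sum_mul_one_sub_mem_followerValues hx hweight,
    sum_mul_one_sub_mem_upperBounds_followerValues hp⟩

end Follower

/-- When everything left by the leader fits, the follower packs all of it, so on `NCR`-feasible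
strategies `f` is the `NCR` objective: `NCR` is the bilevel problem restricted to a set of
strategies that contains the optimal `xstar`. -/
theorem ncr_exact_no_critical_item_general {n : ℕ} {p w v : Fin n → ℤ} {Cu Cl : ℤ}
    (hp : ∀ i, 0 ≤ p i) {f : (Fin n → ℤ) → ℤ}
    (hf : ∀ x, Binary x → IsGreatest (followerValues p w Cl x) (f x))
    {xstar : Fin n → ℤ} (hxb : Binary xstar) (hxfeas : ∑ i, v i * xstar i ≤ Cu)
    (hxopt : ∀ x, Binary x → ∑ i, v i * x i ≤ Cu → f xstar ≤ f x)
    (hcw : ∑ i with xstar i = 0, w i ≤ Cl) :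
    IsLeast (ncrValues p w v Cu Cl) (f xstar) := by
  have f_eq_objective : ∀ x, Binary x → ∑ i, w i * (1 - x i) ≤ Cl →
      f x = ∑ i, p i * (1 - x i) := fun x hx hweight =>
    (hf x hx).unique (isGreatest_followerValues_sum_mul_one_sub hp hx hweight)
  have xstar_weight_le : ∑ i, w i * (1 - xstar i) ≤ Cl := (hxb.sum_mul_one_sub w).trans_le hcw
  refine ⟨⟨xstar, hxb, hxfeas, xstar_weight_le, f_eq_objective xstar hxb xstar_weight_le⟩, ?_⟩
  rintro _ ⟨x, hx, hxv, hxw, rfl⟩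
  calc f xstar ≤ f x := hxopt x hx hxv
    _ = ∑ i, p i * (1 - x i) := f_eq_objective x hx hxw

/-- **NCR is exact in the no-critical-item case.** If some optimal leader strategy
`xstar` (feasible with `f xstar = z*`) leaves non-interdicted items of total follower
weight at most `Cl`, then problem `NCR` is feasible and `z* = z(NCR)`. -/
theorem ncr_exact_no_critical_item
    (n : ℕ) (p w v : Fin n → ℤ) (Cu Cl : ℤ)
    (hp : ∀ i, 0 < p i) (hw : ∀ i, 0 < w i) (hv : ∀ i, 0 < v i)
    (f : (Fin n → ℤ) → ℤ)
    (hf : ∀ x, Binary x → IsGreatest (followerValues p w Cl x) (f x))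
    (xstar : Fin n → ℤ) (hxb : Binary xstar)
    (hxfeas : (∑ i, v i * xstar i) ≤ Cu)
    (hxopt : ∀ x, Binary x → (∑ i, v i * x i) ≤ Cu → f xstar ≤ f x)
    (hcw : (∑ i ∈ univ.filter (fun i => xstar i = 0), w i) ≤ Cl) :
    (ncrValues p w v Cu Cl).Nonempty ∧
    ∀ zN : ℤ, IsLeast (ncrValues p w v Cu Cl) zN → f xstar = zN := by
  have hleast := ncr_exact_no_critical_item_general (fun i => (hp i).le) hf hxb hxfeas hxopt hcw
  exact ⟨hleast.nonempty, fun _ hzN => hleast.unique hzN⟩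
end

section
/- Upper bound on the critical item index: Define z(LW) = max{∑_i w_i x_i : x ∈ {0,1}^n, ∑_i v_i x_i ≤ C_u}. Let j be an index with ∑_{i=1}^j w_i ≥ C_l + z(LW). Then for every feasible leader strategy x with ∑_{i : x_i = 0} w_i > C_l, the critical item c of x satisfies c ≤ j; in particular, no item with index larger than r = min{j : ∑_{i=1}^j w_i ≥ C_l + z(LW)} (when such j exists) can be critical. -/
open Finset

/-!
If `j < c`, every item up to `j` is either interdicted or a free item before `c`. The interdicted
items weigh at most `z(LW)` and the free items before the critical item `c` less than `C_l`, so the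
items up to `j` weigh less than `C_l + z(LW)`.
-/

section OrderedWeights

variable {ι M : Type*} [AddCommMonoid M] [PartialOrder M] {w : ι → M}

theorem sum_le_sum_add_sum_of_subset_union [IsOrderedAddMonoid M] [DecidableEq ι]
    {s t u : Finset ι} (hw : ∀ i ∈ t ∪ u, 0 ≤ w i) (h : s ⊆ t ∪ u) :
    ∑ i ∈ s, w i ≤ ∑ i ∈ t, w i + ∑ i ∈ u, w i :=
  calc
    ∑ i ∈ s, w i ≤ ∑ i ∈ t ∪ u, w i := sum_le_sum_of_subset_of_nonneg h fun i hi _ => hw i hi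
    _ ≤ ∑ i ∈ t ∪ u, w i + ∑ i ∈ t ∩ u, w i :=
      le_add_of_nonneg_right (sum_nonneg fun i hi => hw i (inter_subset_union hi))
    _ = ∑ i ∈ t, w i + ∑ i ∈ u, w i := sum_union_inter

theorem critical_item_upper_index_general [IsOrderedCancelAddMonoid M] [Fintype ι] [LinearOrder ι]
    {free : ι → Prop} [DecidablePred free] {C z : M} {c j : ι} (hw : ∀ i, 0 ≤ w i)
    (hinterdicted : ∑ i with ¬free i, w i ≤ z) (hcritical : ∑ i with i < c ∧ free i, w i < C)
    (hj : C + z ≤ ∑ i with i ≤ j, w i) : c ≤ j := by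
  by_contra! hjc
  have hcover : univ.filter (· ≤ j) ⊆
      univ.filter (fun i => i < c ∧ free i) ∪ univ.filter (¬free ·) := by
    intro i hij
    have hic : i < c := (mem_filter_univ i).mp hij |>.trans_lt hjc
    by_cases hfree : free i <;> simp [hic, hfree]
  refine hj.not_gt ?_
  calc
    ∑ i with i ≤ j, w i ≤ ∑ i with i < c ∧ free i, w i + ∑ i with ¬free i, w i :=
      sum_le_sum_add_sum_of_subset_union (fun i _ => hw i) hcover
    _ < C + z := add_lt_add_of_lt_of_le hcritical hinterdicted

end OrderedWeights

theorem Binary.sum_filter_ne_zero {n : ℕ} {x : Fin n → ℤ} (hx : Binary x) (w : Fin n → ℤ) :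
    ∑ i with x i ≠ 0, w i = ∑ i, w i * x i := by
  rw [sum_filter]
  refine sum_congr rfl fun i _ => ?_
  rcases hx i with hi | hi <;> simp [hi]

/-- **Upper bound on the critical item index.** Let `zLW` be the optimal value of
problem `LW` (the maximum follower weight the leader can interdict), and let `j` be an
index with `∑_{i ≤ j} w i ≥ Cl + zLW`. Then for every feasible leader strategy `x` with
critical item `c`, one has `c ≤ j`; in particular no item with index larger than the
least such `j` can be critical. -/
theorem critical_item_upper_index
    (n : ℕ) (p w v : Fin n → ℤ) (Cu Cl : ℤ)
    (hp : ∀ i, 0 < p i) (hw : ∀ i, 0 < w i) (hv : ∀ i, 0 < v i)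
    (hsort : ∀ i j : Fin n, i ≤ j → p j * w i ≤ p i * w j)
    (zLW : ℤ)
    (hLW : IsGreatest
      {s : ℤ | ∃ x : Fin n → ℤ, Binary x ∧ (∑ i, v i * x i) ≤ Cu ∧ s = ∑ i, w i * x i}
      zLW)
    (j : Fin n) (hj : Cl + zLW ≤ ∑ i ∈ univ.filter (fun i => i ≤ j), w i) :
    ∀ x : Fin n → ℤ, Binary x → (∑ i, v i * x i) ≤ Cu →
      Cl < (∑ i ∈ univ.filter (fun i => x i = 0), w i) →
      ∀ c : Fin n, IsCritical w Cl x c → c ≤ j := by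
  intro x hx hfeas _ c hc
  exact critical_item_upper_index_general (fun i => (hw i).le)
    ((hx.sum_filter_ne_zero w).trans_le (hLW.2 ⟨x, hx, hfeas, rfl⟩)) hc.2.1 hj
end
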